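/- arXiv:2506.03466 — 6 statements merged into one kernel-verified Lean document; each statement's English description precedes it below -/
import Mathlib

section
/- Let b ≥ 1 and let Q ∈ ℝ^{2b×2b} be an orthogonal matrix with Q₁ ∈ ℝ^{b×2b} its first b rows. Suppose P ∈ ℝ^{2b×2b} is a permutation matrix, L ∈ ℝ^{2b×b} is unit lower trapezoidal with every entry bounded in absolute value by 1, U ∈ ℝ^{b×b} is upper triangular, and Q₁ᵀ = Pᵀ L U. Let Q̃₁₁ denote the upper-left b×b block of Q Pᵀ. Then the smallest singular value of Q̃₁₁ satisfies σ_min(Q̃₁₁) ≥ 3√2 · [(3b² + b)(4^b + 6b − 1)]^{−1/2}. -/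
open Matrix

/-- The smallest singular value of a square real matrix `M`, defined as the infimum of
`‖M x‖₂` over Euclidean-unit vectors `x`. -/
noncomputable def sigmaMin {b : ℕ} (M : Matrix (Fin b) (Fin b) ℝ) : ℝ :=
  sInf {r : ℝ | ∃ x : EuclideanSpace ℝ (Fin b), ‖x‖ = 1 ∧
    r = ‖(WithLp.equiv 2 (Fin b → ℝ)).symm (M.mulVec (WithLp.equiv 2 (Fin b → ℝ) x))‖}

/-! Write `L₁` for the top block of `L`, so that `Q̃₁₁ᵀ = L₁ U`. Back substitution bounds the
inverse of the unit triangular `L₁`: solving `x L₁ = z` gives `|xⱼ| ≤ |zⱼ| + ∑_{i > j} |xᵢ|`, so the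
tail sums of `|x|` at most double at each step, up to `|zⱼ|`; squaring the doubling produces the
powers of `4`. The factor `U` is inverted without looking at its entries: `L U` has orthonormal
columns, so `U⁻¹ = (L U)ᵀ L`, whose norm is at most the Frobenius norm of `L`. -/

section OrderedField

variable {K : Type*} [Field K] [LinearOrder K] [IsStrictOrderedRing K]

lemma add_sq_le_mul_of_sq_le_mul {s t C A : K} (hC : 0 ≤ C) (hA : 0 ≤ A) (h : s ^ 2 ≤ C * A) :
    (s + t) ^ 2 ≤ (C + 1) * (A + t ^ 2) := by
  have cross : 2 * (s * t) ≤ C * t ^ 2 + A := by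
    refine le_of_abs_le (abs_le_of_sq_le_sq ?_ (by positivity))
    calc (2 * (s * t)) ^ 2 = 4 * (s ^ 2 * t ^ 2) := by ring
      _ ≤ 4 * (C * A * t ^ 2) := by gcongr
      _ ≤ (C * t ^ 2 + A) ^ 2 := by linear_combination sq_nonneg (C * t ^ 2 - A)
  linear_combination h + cross

lemma sq_sum_le_of_le_add_sum_Ioi {n : ℕ} {r a : Fin n → K} (hr : ∀ i, 0 ≤ r i)
    (h : ∀ i, r i ≤ a i + ∑ j ∈ Finset.Ioi i, r j) :
    (∑ i, r i) ^ 2 ≤ (4 ^ n - 1) / 3 * ∑ i, a i ^ 2 := by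
  induction n with
  | zero => simp
  | succ n ih =>
    have tail := ih (r := fun i => r i.succ) (a := fun i => a i.succ) (fun i => hr i.succ)
      fun i => by simpa only [Fin.sum_Ioi_succ] using h i.succ
    have head := h 0
    rw [Fin.sum_Ioi_zero] at head
    rw [Fin.sum_univ_succ, Fin.sum_univ_succ]
    set T := ∑ i : Fin n, r i.succ
    set A := ∑ i : Fin n, a i.succ ^ 2
    have hT : 0 ≤ T := Finset.sum_nonneg fun i _ => hr i.succ
    have hA : 0 ≤ A := Finset.sum_nonneg fun i _ => sq_nonneg _
    have hpow : (1 : K) ≤ 4 ^ n := one_le_pow₀ (by norm_num)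
    calc (r 0 + T) ^ 2 ≤ (2 * T + a 0) ^ 2 :=
          pow_le_pow_left₀ (add_nonneg (hr 0) hT) (by linarith) 2
      _ ≤ (4 * ((4 ^ n - 1) / 3) + 1) * (A + a 0 ^ 2) :=
          add_sq_le_mul_of_sq_le_mul (by linarith) hA (by linear_combination 4 * tail)
      _ = (4 ^ (n + 1) - 1) / 3 * (a 0 ^ 2 + A) := by ring

lemma sum_sq_le_of_le_add_sum_Ioi {n : ℕ} {r a : Fin n → K} (hr : ∀ i, 0 ≤ r i)
    (h : ∀ i, r i ≤ a i + ∑ j ∈ Finset.Ioi i, r j) :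
    ∑ i, r i ^ 2 ≤ (4 ^ n + 6 * n - 1) / 9 * ∑ i, a i ^ 2 := by
  induction n with
  | zero => simp
  | succ n ih =>
    have hr' : ∀ i : Fin n, 0 ≤ r i.succ := fun i => hr i.succ
    have h' : ∀ i : Fin n, r i.succ ≤ a i.succ + ∑ j ∈ Finset.Ioi i, r j.succ := fun i => by
      simpa only [Fin.sum_Ioi_succ] using h i.succ
    have head := h 0
    rw [Fin.sum_Ioi_zero] at head
    rw [Fin.sum_univ_succ, Fin.sum_univ_succ (f := fun i => a i ^ 2)]
    set A := ∑ i : Fin n, a i.succ ^ 2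
    have hA : 0 ≤ A := Finset.sum_nonneg fun i _ => sq_nonneg _
    have hpow : (1 : K) ≤ 4 ^ n := one_le_pow₀ (by norm_num)
    have head_sq : r 0 ^ 2 ≤ ((4 ^ n - 1) / 3 + 1) * (A + a 0 ^ 2) :=
      calc r 0 ^ 2 ≤ (∑ i : Fin n, r i.succ + a 0) ^ 2 :=
            pow_le_pow_left₀ (hr 0) (by linarith) 2
        _ ≤ _ := add_sq_le_mul_of_sq_le_mul (by linarith) hA (sq_sum_le_of_le_add_sum_Ioi hr' h')
    have tail_sq : ∑ i : Fin n, r i.succ ^ 2 ≤ (4 ^ n + 6 * n - 1) / 9 * (A + a 0 ^ 2) :=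
      (ih hr' h').trans <|
        mul_le_mul_of_nonneg_left (le_add_of_nonneg_right (sq_nonneg _))
          (div_nonneg (by linarith [n.cast_nonneg (α := K)]) (by norm_num))
    calc r 0 ^ 2 + ∑ i : Fin n, r i.succ ^ 2
        ≤ ((4 ^ n - 1) / 3 + 1) * (A + a 0 ^ 2) + (4 ^ n + 6 * n - 1) / 9 * (A + a 0 ^ 2) :=
          add_le_add head_sq tail_sq
      _ = (4 ^ (n + 1) + 6 * ↑(n + 1) - 1) / 9 * (a 0 ^ 2 + A) := by push_cast; ring

lemma vecMul_eq_add_sum_Ioi {R ι : Type*} [NonAssocSemiring R] [LinearOrder ι] [Fintype ι]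
    [LocallyFiniteOrderTop ι] {M : Matrix ι ι R} (hM : M.IsLowerTriangular) (hdiag : ∀ i, M i i = 1)
    (x : ι → R) (j : ι) :
    (x ᵥ* M) j = x j + ∑ i ∈ Finset.Ioi j, x i * M i j := by
  calc (x ᵥ* M) j = ∑ i ∈ Finset.Ici j, x i * M i j := by
        refine (Finset.sum_subset (Finset.subset_univ _) fun i _ hi => ?_).symm
        exact mul_eq_zero_of_right _ (hM (by simpa using hi))
    _ = x j + ∑ i ∈ Finset.Ioi j, x i * M i j := by
        rw [← Finset.add_sum_Ioi_eq_sum_Ici, hdiag, mul_one]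

lemma abs_le_abs_vecMul_add_sum_Ioi {R ι : Type*} [Ring R] [LinearOrder R] [IsStrictOrderedRing R]
    [LinearOrder ι] [Fintype ι] [LocallyFiniteOrderTop ι] {M : Matrix ι ι R}
    (hM : M.IsLowerTriangular) (hdiag : ∀ i, M i i = 1) (hbdd : ∀ i j, |M i j| ≤ 1)
    (x : ι → R) (j : ι) :
    |x j| ≤ |(x ᵥ* M) j| + ∑ i ∈ Finset.Ioi j, |x i| :=
  calc |x j| = |(x ᵥ* M) j - ∑ i ∈ Finset.Ioi j, x i * M i j| := by
        rw [vecMul_eq_add_sum_Ioi hM hdiag, add_sub_cancel_right]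
    _ ≤ |(x ᵥ* M) j| + |∑ i ∈ Finset.Ioi j, x i * M i j| := abs_sub _ _
    _ ≤ |(x ᵥ* M) j| + ∑ i ∈ Finset.Ioi j, |x i| := by
        gcongr
        refine (Finset.abs_sum_le_sum_abs _ _).trans (Finset.sum_le_sum fun i _ => ?_)
        rw [abs_mul]
        exact mul_le_of_le_one_right (abs_nonneg _) (hbdd i j)

lemma sum_sq_le_mul_sum_sq_vecMul_of_isLowerTriangular {n : ℕ} {M : Matrix (Fin n) (Fin n) K}
    (hM : M.IsLowerTriangular) (hdiag : ∀ i, M i i = 1) (hbdd : ∀ i j, |M i j| ≤ 1)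
    (x : Fin n → K) :
    ∑ i, x i ^ 2 ≤ (4 ^ n + 6 * n - 1) / 9 * ∑ i, (x ᵥ* M) i ^ 2 := by
  simpa only [sq_abs] using sum_sq_le_of_le_add_sum_Ioi (fun i => abs_nonneg (x i))
    (abs_le_abs_vecMul_add_sum_Ioi hM hdiag hbdd x)

lemma sum_sq_vecMul_le {R m n : Type*} [CommRing R] [LinearOrder R] [IsStrictOrderedRing R]
    [Fintype m] [Fintype n] (A : Matrix m n R) (x : m → R) :
    ∑ j, (x ᵥ* A) j ^ 2 ≤ (∑ j, ∑ i, A i j ^ 2) * ∑ i, x i ^ 2 := by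
  rw [mul_comm, Finset.mul_sum]
  exact Finset.sum_le_sum fun j _ => Finset.sum_mul_sq_le_sq_mul_sq Finset.univ x (A · j)

lemma sum_sq_vecMul_of_mul_transpose_eq_one {R m n : Type*} [CommSemiring R] [Fintype m]
    [Fintype n] [DecidableEq m] {A : Matrix m n R} (hA : A * Aᵀ = 1) (x : m → R) :
    ∑ j, (x ᵥ* A) j ^ 2 = ∑ i, x i ^ 2 := by
  have : (x ᵥ* A) ⬝ᵥ (x ᵥ* A) = x ⬝ᵥ x := by
    rw [← dotProduct_mulVec, ← vecMul_transpose, vecMul_vecMul,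
      hA, vecMul_one]
  simpa only [dotProduct, ← sq] using this

lemma sum_sq_le_mul_sum_sq_vecMul_of_orthonormal_mul {R m n : Type*} [CommRing R] [LinearOrder R]
    [IsStrictOrderedRing R] [Fintype m] [Fintype n] [DecidableEq n] {L : Matrix m n R}
    {U : Matrix n n R} (h : (L * U)ᵀ * (L * U) = 1) (x : n → R) :
    ∑ i, x i ^ 2 ≤ (∑ j, ∑ i, L i j ^ 2) * ∑ i, (x ᵥ* U) i ^ 2 := by
  have right_inv : U * ((L * U)ᵀ * L) = 1 :=
    mul_eq_one_comm.1 (by rw [Matrix.mul_assoc, h])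
  have hx : x ᵥ* U ᵥ* (L * U)ᵀ ᵥ* L = x := by
    rw [vecMul_vecMul, vecMul_vecMul, right_inv, vecMul_one]
  calc ∑ i, x i ^ 2 = ∑ i, (x ᵥ* U ᵥ* (L * U)ᵀ ᵥ* L) i ^ 2 := by rw [hx]
    _ ≤ (∑ j, ∑ i, L i j ^ 2) * ∑ i, (x ᵥ* U ᵥ* (L * U)ᵀ) i ^ 2 := sum_sq_vecMul_le _ _
    _ = (∑ j, ∑ i, L i j ^ 2) * ∑ i, (x ᵥ* U) i ^ 2 := by
        rw [sum_sq_vecMul_of_mul_transpose_eq_one (by rwa [transpose_transpose])]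

lemma sum_sub_natCast_fin (c : K) (n : ℕ) :
    ∑ j : Fin n, (c - (j : ℕ)) = n * (2 * c - n + 1) / 2 := by
  induction n with
  | zero => simp
  | succ n ih =>
    simp only [Fin.sum_univ_castSucc, Fin.val_castSucc, Fin.val_last, ih]
    push_cast
    ring

lemma sum_sq_le_of_lowerTrapezoidal {m n : ℕ} (hnm : n ≤ m) {L : Matrix (Fin m) (Fin n) K}
    (hzero : ∀ (i : Fin m) (j : Fin n), (i : ℕ) < j → L i j = 0) (hbdd : ∀ i j, |L i j| ≤ 1) :
    ∑ j, ∑ i, L i j ^ 2 ≤ n * (2 * m - n + 1) / 2 := by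
  have column (j : Fin n) : ∑ i, L i j ^ 2 ≤ (m : K) - (j : ℕ) :=
    calc ∑ i, L i j ^ 2 = ∑ i ∈ Finset.Ici (Fin.castLE hnm j), L i j ^ 2 := by
          refine (Finset.sum_subset (Finset.subset_univ _) fun i _ hi => ?_).symm
          rw [hzero i j (by simpa [Fin.lt_def] using hi), zero_pow two_ne_zero]
      _ ≤ ∑ i ∈ Finset.Ici (Fin.castLE hnm j), 1 :=
          Finset.sum_le_sum fun i _ => (sq_le_one_iff_abs_le_one _).2 (hbdd i j)
      _ = (m : K) - (j : ℕ) := by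
          rw [Finset.sum_const, Fin.card_Ici, nsmul_one, Fin.val_castLE,
            Nat.cast_sub (j.is_lt.le.trans hnm)]
  exact (Finset.sum_le_sum fun j _ => column j).trans_eq (sum_sub_natCast_fin _ _)

lemma sum_sq_le_mul_sum_sq_vecMul_topBlock_mul {m n : ℕ} (hnm : n ≤ m)
    {L : Matrix (Fin m) (Fin n) K} {U : Matrix (Fin n) (Fin n) K}
    (hdiag : ∀ i, L (Fin.castLE hnm i) i = 1)
    (hzero : ∀ (i : Fin m) (j : Fin n), (i : ℕ) < j → L i j = 0) (hbdd : ∀ i j, |L i j| ≤ 1)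
    (horth : (L * U)ᵀ * (L * U) = 1) (x : Fin n → K) :
    ∑ i, x i ^ 2 ≤ n * (2 * m - n + 1) * (4 ^ n + 6 * n - 1) / 18 *
      ∑ i, (x ᵥ* (L.submatrix (Fin.castLE hnm) id * U)) i ^ 2 := by
  set L₁ := L.submatrix (Fin.castLE hnm) id
  have hpow : (1 : K) ≤ 4 ^ n := one_le_pow₀ (by norm_num)
  have hS : (0 : K) ≤ (4 ^ n + 6 * n - 1) / 9 :=
    div_nonneg (by linarith [n.cast_nonneg (α := K)]) (by norm_num)
  calc ∑ i, x i ^ 2 ≤ (4 ^ n + 6 * n - 1) / 9 * ∑ i, (x ᵥ* L₁) i ^ 2 :=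
        sum_sq_le_mul_sum_sq_vecMul_of_isLowerTriangular (M := L₁) (fun _ j hij => hzero _ j hij)
          hdiag (fun _ j => hbdd _ j) x
    _ ≤ (4 ^ n + 6 * n - 1) / 9 *
          ((∑ j, ∑ i, L i j ^ 2) * ∑ i, (x ᵥ* L₁ ᵥ* U) i ^ 2) :=
        mul_le_mul_of_nonneg_left (sum_sq_le_mul_sum_sq_vecMul_of_orthonormal_mul horth _) hS
    _ ≤ (4 ^ n + 6 * n - 1) / 9 *
          (n * (2 * m - n + 1) / 2 * ∑ i, (x ᵥ* L₁ ᵥ* U) i ^ 2) :=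
        mul_le_mul_of_nonneg_left
          (mul_le_mul_of_nonneg_right (sum_sq_le_of_lowerTrapezoidal hnm hzero hbdd)
            (Finset.sum_nonneg fun _ _ => sq_nonneg _)) hS
    _ = n * (2 * m - n + 1) * (4 ^ n + 6 * n - 1) / 18 * ∑ i, (x ᵥ* (L₁ * U)) i ^ 2 := by
        rw [vecMul_vecMul]
        ring

end OrderedField

lemma inv_sqrt_le_sigmaMin {b : ℕ} (hb : 0 < b) {M : Matrix (Fin b) (Fin b) ℝ} {K : ℝ}
    (h : ∀ x : Fin b → ℝ, ∑ i, x i ^ 2 ≤ K * ∑ i, (M *ᵥ x) i ^ 2) : (√K)⁻¹ ≤ sigmaMin M := by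
  refine le_csInf ⟨_, EuclideanSpace.single ⟨0, hb⟩ 1, by simp, rfl⟩ ?_
  rintro _ ⟨x, hx, rfl⟩
  set y : EuclideanSpace ℝ (Fin b) := (WithLp.equiv 2 _).symm (M *ᵥ WithLp.equiv 2 _ x)
  have hxy : 1 ≤ K * ‖y‖ ^ 2 := by
    rw [← one_pow 2, ← hx, EuclideanSpace.real_norm_sq_eq, EuclideanSpace.real_norm_sq_eq]
    exact h x
  have hK : 0 < K := pos_of_mul_pos_left (one_pos.trans_le hxy) (sq_nonneg _)
  rw [inv_le_iff_one_le_mul₀' (Real.sqrt_pos.2 hK), ← Real.sqrt_sq (norm_nonneg y),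
    ← Real.sqrt_mul hK.le]
  exact Real.one_le_sqrt.2 hxy

lemma three_mul_sqrt_two_mul_rpow_neg_half {X : ℝ} (hX : 0 ≤ X) :
    3 * √2 * X ^ (-(1 / 2) : ℝ) = (√(X / 18))⁻¹ := by
  have sqrt_eighteen : √18 = 3 * √2 := by
    rw [show (18 : ℝ) = 3 ^ 2 * 2 by norm_num, Real.sqrt_mul (by positivity),
      Real.sqrt_sq (by norm_num)]
  rw [Real.rpow_neg hX, ← Real.sqrt_eq_rpow, Real.sqrt_div hX, inv_div, sqrt_eighteen,
    div_eq_mul_inv]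

theorem pivoted_block_rotation_sigmaMin_bound_general {m b : ℕ} (hb : 0 < b) (hbm : b ≤ m)
    {Q P : Matrix (Fin m) (Fin m) ℝ} (hQ : Qᵀ * Q = 1) (hP : Pᵀ * P = 1)
    {L : Matrix (Fin m) (Fin b) ℝ} {U : Matrix (Fin b) (Fin b) ℝ}
    (hLdiag : ∀ i, L (Fin.castLE hbm i) i = 1)
    (hLzero : ∀ (i : Fin m) (j : Fin b), (i : ℕ) < j → L i j = 0) (hLbdd : ∀ i j, |L i j| ≤ 1)
    (hfact : (Q.submatrix (Fin.castLE hbm) id)ᵀ = Pᵀ * L * U) :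
    3 * √2 * ((b : ℝ) * (2 * m - b + 1) * (4 ^ b + 6 * b - 1)) ^ (-(1 / 2) : ℝ) ≤
      sigmaMin ((Q * Pᵀ).submatrix (Fin.castLE hbm) (Fin.castLE hbm)) := by
  set Q₁ := Q.submatrix (Fin.castLE hbm) id with hQ₁
  have hLU : L * U = (Q₁ * Pᵀ)ᵀ := by
    rw [transpose_mul, transpose_transpose, hfact, Matrix.mul_assoc, ← Matrix.mul_assoc P,
      mul_eq_one_comm.1 hP, Matrix.one_mul]
  have hrows : Q₁ * Q₁ᵀ = 1 := by
    rw [hQ₁, transpose_submatrix, ← submatrix_mul _ _ _ _ _ Function.bijective_id,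
      mul_eq_one_comm.1 hQ, submatrix_one _ (Fin.castLE_injective hbm)]
  have horth : (L * U)ᵀ * (L * U) = 1 := by
    rw [hLU, transpose_transpose, transpose_mul, transpose_transpose, Matrix.mul_assoc,
      ← Matrix.mul_assoc Pᵀ, hP, Matrix.one_mul, hrows]
  have hblock : (Q * Pᵀ).submatrix (Fin.castLE hbm) (Fin.castLE hbm) =
      (L.submatrix (Fin.castLE hbm) id * U)ᵀ :=
    calc (Q * Pᵀ).submatrix (Fin.castLE hbm) (Fin.castLE hbm)
        = (Q₁ * Pᵀ).submatrix id (Fin.castLE hbm) := rfl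
      _ = ((L * U)ᵀ).submatrix id (Fin.castLE hbm) := by rw [hLU, transpose_transpose]
      _ = (L.submatrix (Fin.castLE hbm) id * U)ᵀ := rfl
  have hpos : (0 : ℝ) ≤ b * (2 * m - b + 1) * (4 ^ b + 6 * b - 1) := by
    have hbm' : (b : ℝ) ≤ m := by exact_mod_cast hbm
    have hpow : (1 : ℝ) ≤ 4 ^ b := one_le_pow₀ (by norm_num)
    have hb' : (0 : ℝ) ≤ b := b.cast_nonneg
    exact mul_nonneg (mul_nonneg hb' (by linarith)) (by linarith)
  rw [three_mul_sqrt_two_mul_rpow_neg_half hpos]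
  refine inv_sqrt_le_sigmaMin hb fun x => ?_
  rw [hblock, mulVec_transpose]
  exact sum_sq_le_mul_sum_sq_vecMul_topBlock_mul hbm hLdiag hLzero hLbdd horth x

/-- Lemma 3.1: the singular value bound for the pivoted block rotation. -/
theorem pivoted_block_rotation_sigmaMin_bound (b : ℕ) (hb : 1 ≤ b)
    (Q : Matrix (Fin (2*b)) (Fin (2*b)) ℝ) (hQ : Qᵀ * Q = 1)
    (Q₁ : Matrix (Fin b) (Fin (2*b)) ℝ)
    (hQ₁ : ∀ (i : Fin b) (j : Fin (2*b)), Q₁ i j = Q (Fin.castLE (by omega) i) j)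
    (P : Matrix (Fin (2*b)) (Fin (2*b)) ℝ)
    (hP : ∃ σ : Equiv.Perm (Fin (2*b)), ∀ i j, P i j = if σ i = j then 1 else 0)
    (L : Matrix (Fin (2*b)) (Fin b) ℝ)
    (hLdiag : ∀ i : Fin b, L (Fin.castLE (by omega) i) i = 1)
    (hLzero : ∀ (i : Fin (2*b)) (j : Fin b), (i : ℕ) < (j : ℕ) → L i j = 0)
    (hLbdd : ∀ (i : Fin (2*b)) (j : Fin b), |L i j| ≤ 1)
    (U : Matrix (Fin b) (Fin b) ℝ)
    (hU : ∀ i j : Fin b, (j : ℕ) < (i : ℕ) → U i j = 0)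
    (hfact : Q₁ᵀ = Pᵀ * L * U)
    (Q11 : Matrix (Fin b) (Fin b) ℝ)
    (hQ11 : ∀ i j : Fin b,
      Q11 i j = (Q * Pᵀ) (Fin.castLE (by omega) i) (Fin.castLE (by omega) j)) :
    3 * Real.sqrt 2 * ((3 * (b:ℝ)^2 + b) * (4 ^ b + 6 * b - 1)) ^ (-(1/2) : ℝ) ≤
      sigmaMin Q11 := by
  obtain ⟨σ, hσ⟩ := hP
  obtain rfl : P = σ.permMatrix ℝ := by
    ext i j
    simp [hσ, PEquiv.toMatrix_apply, eq_comm]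
  have hP : (σ.permMatrix ℝ)ᵀ * σ.permMatrix ℝ = 1 := by
    rw [transpose_permMatrix, ← permMatrix_mul, mul_inv_cancel, permMatrix_one]
  obtain rfl : Q₁ = Q.submatrix (Fin.castLE (by omega)) id := Matrix.ext hQ₁
  obtain rfl : Q11 = (Q * (σ.permMatrix ℝ)ᵀ).submatrix _ _ := Matrix.ext hQ11
  convert pivoted_block_rotation_sigmaMin_bound_general hb _ hQ hP hLdiag hLzero hLbdd hfact
    using 4
  push_cast
  ring
end

section
/- Let b ≥ 1 and let L ∈ ℝ^{b×b} be unit lower triangular with |L(i,j)| ≤ 1 for all i > j. Then L is invertible and the squared Frobenius norm of its inverse satisfies ‖L⁻¹‖_F² ≤ (4^b + 6b − 1)/9; hence the spectral norm satisfies ‖L⁻¹‖₂ ≤ (1/3)·(4^b + 6b − 1)^{1/2}. -/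
open Matrix

/-- The spectral norm of a real matrix: the operator norm of the induced linear map
between Euclidean spaces. -/
noncomputable def specNorm {m n : ℕ} (M : Matrix (Fin m) (Fin n) ℝ) : ℝ :=
  ‖LinearMap.toContinuousLinearMap (Matrix.toEuclideanLin M)‖

/-!
If the entries of `L` below the diagonal are bounded by `c`, forward substitution in `L * L⁻¹ = 1`
bounds the entries on the `d`-th subdiagonal of `L⁻¹` by the solution of
`u d = c * ∑ e < d, u e`, `u 0 = 1`, that is, `u (d + 1) = c * (1 + c) ^ d`. Summing the squares,
which is a geometric sum along each row and another one over the rows, bounds the Frobenius norm,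
and the Frobenius norm dominates the operator norm.
-/

open Finset

section OperatorNorm

open scoped Matrix.Norms.Frobenius

theorem norm_toEuclideanLin_le_sqrt_sum_sq {𝕜 m n : Type*} [RCLike 𝕜] [Fintype m] [Fintype n]
    [DecidableEq n] (A : Matrix m n 𝕜) :
    ‖(toEuclideanLin A).toContinuousLinearMap‖ ≤ √(∑ i, ∑ j, ‖A i j‖ ^ 2) := by
  have frobenius_eq : ‖A‖ = √(∑ i, ∑ j, ‖A i j‖ ^ 2) := by
    simp only [frobenius_norm_def, Real.sqrt_eq_rpow, Real.rpow_ofNat]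
  rw [← frobenius_eq]
  refine ContinuousLinearMap.opNorm_le_bound _ (norm_nonneg A) fun x => ?_
  calc ‖toEuclideanLin A x‖ = ‖A * replicateCol Unit x.ofLp‖ := by
        rw [← replicateCol_mulVec, frobenius_norm_replicateCol, toLpLin_apply]
    _ ≤ ‖A‖ * ‖replicateCol Unit x.ofLp‖ := frobenius_norm_mul _ _
    _ = ‖A‖ * ‖x‖ := by rw [frobenius_norm_replicateCol]

end OperatorNorm

section UnitLowerTriangular

variable {ι R : Type*} [LinearOrder ι] [Fintype ι] [CommRing R] {L : Matrix ι ι R}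

theorem isLowerTriangular_inv (hL : L.IsLowerTriangular) (hdet : IsUnit L.det) :
    L⁻¹.IsLowerTriangular :=
  haveI := invertibleOfIsUnitDet L hdet
  blockTriangular_inv_of_blockTriangular hL

theorem isUnit_det_of_isLowerTriangular_of_diag_eq_one (hL : L.IsLowerTriangular)
    (hdiag : ∀ i, L i i = 1) : IsUnit L.det := by
  simp [det_of_isLowerTriangular L hL, hdiag]

theorem inv_apply_eq_one_apply_sub_sum_Ico [LocallyFiniteOrder ι] (hL : L.IsLowerTriangular)
    (hdiag : ∀ i, L i i = 1) (i j : ι) :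
    L⁻¹ i j = (1 : Matrix ι ι R) i j - ∑ k ∈ Ico j i, L i k * L⁻¹ k j := by
  have hdet := isUnit_det_of_isLowerTriangular_of_diag_eq_one hL hdiag
  have hLinv := isLowerTriangular_inv hL hdet
  have vanish : ∀ k ∉ insert i (Ico j i), L i k * L⁻¹ k j = 0 := fun k hk => by
    rw [mem_insert, mem_Ico, not_or, not_and, not_lt] at hk
    obtain hkj | hjk := lt_or_ge k j
    · rw [hLinv hkj, mul_zero]
    · rw [hL ((hk.2 hjk).lt_of_ne' hk.1), zero_mul]
  rw [eq_sub_iff_add_eq]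
  calc L⁻¹ i j + ∑ k ∈ Ico j i, L i k * L⁻¹ k j
      = ∑ k ∈ insert i (Ico j i), L i k * L⁻¹ k j := by
        rw [sum_insert right_notMem_Ico, hdiag, one_mul]
    _ = ∑ k, L i k * L⁻¹ k j := sum_subset (subset_univ _) fun k _ hk => vanish k hk
    _ = (1 : Matrix ι ι R) i j := by rw [← mul_apply, mul_nonsing_inv L hdet]

end UnitLowerTriangular

/-- The bound for the entries on the `d`-th subdiagonal of the inverse of a unit lower triangular
matrix whose entries below the diagonal have norm at most `c`. -/
def invSubdiagBound {K : Type*} [Semiring K] (c : K) : ℕ → K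
  | 0 => 1
  | d + 1 => c * (1 + c) ^ d

theorem sum_range_succ_invSubdiagBound {K : Type*} [CommSemiring K] (c : K) (d : ℕ) :
    ∑ e ∈ range (d + 1), invSubdiagBound c e = (1 + c) ^ d := by
  induction d with
  | zero => simp [invSubdiagBound]
  | succ d ih =>
    rw [sum_range_succ, ih, invSubdiagBound]
    ring

theorem sum_range_succ_invSubdiagBound_sq {K : Type*} [Field K] {c : K} (hc : c + 2 ≠ 0) (d : ℕ) :
    ∑ e ∈ range (d + 1), invSubdiagBound c e ^ 2 = (2 + c * ((1 + c) ^ 2) ^ d) / (c + 2) := by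
  induction d with
  | zero =>
    simp only [zero_add, sum_range_one, invSubdiagBound]
    field_simp
    ring
  | succ d ih =>
    rw [sum_range_succ, ih, invSubdiagBound, mul_pow, pow_right_comm _ d 2]
    field_simp
    ring

theorem sum_range_sum_range_succ_invSubdiagBound_sq {K : Type*} [Field K] {c : K}
    (hc : c + 2 ≠ 0) (n : ℕ) :
    ∑ i ∈ range n, ∑ e ∈ range (i + 1), invSubdiagBound c e ^ 2 =
      (((1 + c) ^ 2) ^ n + 2 * (c + 2) * n - 1) / (c + 2) ^ 2 := by
  induction n with
  | zero => simp
  | succ n ih =>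
    rw [sum_range_succ, ih, sum_range_succ_invSubdiagBound_sq hc]
    push_cast
    field_simp
    ring

section EntryBound

variable {R : Type*} [SeminormedCommRing R] [NormOneClass R] {n : ℕ} {L : Matrix (Fin n) (Fin n) R}
  {c : ℝ}

theorem norm_inv_apply_le_invSubdiagBound (hL : L.IsLowerTriangular)
    (hdiag : ∀ i, L i i = 1) (hbdd : ∀ i j, j < i → ‖L i j‖ ≤ c) {i j : Fin n} (hji : j ≤ i) :
    ‖L⁻¹ i j‖ ≤ invSubdiagBound c (i - j : ℕ) := by
  induction i using WellFoundedLT.induction with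
  | ind i ih =>
  rw [inv_apply_eq_one_apply_sub_sum_Ico hL hdiag]
  obtain rfl | hji := hji.eq_or_lt
  · simp [invSubdiagBound]
  obtain ⟨d, hd⟩ : ∃ d, (i : ℕ) - j = d + 1 := Nat.exists_eq_succ_of_ne_zero (by lia)
  calc ‖(1 : Matrix (Fin n) (Fin n) R) i j - ∑ k ∈ Ico j i, L i k * L⁻¹ k j‖
      = ‖∑ k ∈ Ico j i, L i k * L⁻¹ k j‖ := by rw [one_apply_ne hji.ne', zero_sub, norm_neg]
    _ ≤ ∑ k ∈ Ico j i, c * invSubdiagBound c (k - j) := norm_sum_le_of_le _ fun k hk => by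
        obtain ⟨hjk, hki⟩ := mem_Ico.1 hk
        exact norm_mul_le_of_le (hbdd i k hki) (ih k hki hjk)
    _ = c * ∑ k ∈ Ico (j : ℕ) i, invSubdiagBound c (k - j) := by
        rw [← Fin.map_valEmbedding_Ico, sum_map, mul_sum]
        rfl
    _ = c * ∑ e ∈ range (i - j), invSubdiagBound c e := by
        simp only [sum_Ico_eq_sum_range, Nat.add_sub_cancel_left]
    _ = invSubdiagBound c (i - j) := by
        rw [hd, sum_range_succ_invSubdiagBound, invSubdiagBound]

theorem sum_norm_inv_apply_sq_le_sum_invSubdiagBound_sq (hL : L.IsLowerTriangular)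
    (hdiag : ∀ i, L i i = 1) (hbdd : ∀ i j, j < i → ‖L i j‖ ≤ c) (i : Fin n) :
    ∑ j, ‖L⁻¹ i j‖ ^ 2 ≤ ∑ e ∈ range (i + 1), invSubdiagBound c e ^ 2 := by
  have hLinv :=
    isLowerTriangular_inv hL (isUnit_det_of_isLowerTriangular_of_diag_eq_one hL hdiag)
  calc ∑ j, ‖L⁻¹ i j‖ ^ 2 = ∑ j ∈ Iic i, ‖L⁻¹ i j‖ ^ 2 :=
        (sum_subset (subset_univ _) fun j _ hj => by
          rw [hLinv (not_le.1 fun hji => hj (mem_Iic.2 hji)), norm_zero, zero_pow two_ne_zero]).symm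
    _ ≤ ∑ j ∈ Iic i, invSubdiagBound c (i - j) ^ 2 := by
        gcongr with j hj
        exact norm_inv_apply_le_invSubdiagBound hL hdiag hbdd (mem_Iic.1 hj)
    _ = ∑ j ∈ range (i + 1), invSubdiagBound c (i - j) ^ 2 := by
        rw [Nat.range_succ_eq_Iic, ← Fin.map_valEmbedding_Iic, sum_map]
        rfl
    _ = ∑ e ∈ range (i + 1), invSubdiagBound c e ^ 2 := sum_flip fun e => invSubdiagBound c e ^ 2

theorem sum_sum_norm_inv_apply_sq_le (hc : 0 ≤ c) (hL : L.IsLowerTriangular)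
    (hdiag : ∀ i, L i i = 1) (hbdd : ∀ i j, j < i → ‖L i j‖ ≤ c) :
    ∑ i, ∑ j, ‖L⁻¹ i j‖ ^ 2 ≤ (((1 + c) ^ 2) ^ n + 2 * (c + 2) * n - 1) / (c + 2) ^ 2 :=
  calc ∑ i, ∑ j, ‖L⁻¹ i j‖ ^ 2
      ≤ ∑ i : Fin n, ∑ e ∈ range (i + 1), invSubdiagBound c e ^ 2 := by
        gcongr with i
        exact sum_norm_inv_apply_sq_le_sum_invSubdiagBound_sq hL hdiag hbdd i
    _ = (((1 + c) ^ 2) ^ n + 2 * (c + 2) * n - 1) / (c + 2) ^ 2 := by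
        rw [Fin.sum_univ_eq_sum_range (fun i => ∑ e ∈ range (i + 1), invSubdiagBound c e ^ 2),
          sum_range_sum_range_succ_invSubdiagBound_sq (by positivity)]

end EntryBound

theorem unit_lower_triangular_inv_norm_bound_general {𝕜 : Type*} [RCLike 𝕜] {n : ℕ}
    {L : Matrix (Fin n) (Fin n) 𝕜} {c : ℝ} (hc : 0 ≤ c) (hL : L.IsLowerTriangular)
    (hdiag : ∀ i, L i i = 1) (hbdd : ∀ i j, j < i → ‖L i j‖ ≤ c) :
    IsUnit L.det ∧
    ∑ i, ∑ j, ‖L⁻¹ i j‖ ^ 2 ≤ (((1 + c) ^ 2) ^ n + 2 * (c + 2) * n - 1) / (c + 2) ^ 2 ∧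
    ‖(toEuclideanLin L⁻¹).toContinuousLinearMap‖ ≤
      1 / (c + 2) * √(((1 + c) ^ 2) ^ n + 2 * (c + 2) * n - 1) := by
  have frobenius_le := sum_sum_norm_inv_apply_sq_le hc hL hdiag hbdd
  refine ⟨isUnit_det_of_isLowerTriangular_of_diag_eq_one hL hdiag, frobenius_le, ?_⟩
  calc ‖(toEuclideanLin L⁻¹).toContinuousLinearMap‖
      ≤ √(∑ i, ∑ j, ‖L⁻¹ i j‖ ^ 2) := norm_toEuclideanLin_le_sqrt_sum_sq _
    _ ≤ √((((1 + c) ^ 2) ^ n + 2 * (c + 2) * n - 1) / (c + 2) ^ 2) :=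
        Real.sqrt_le_sqrt frobenius_le
    _ = 1 / (c + 2) * √(((1 + c) ^ 2) ^ n + 2 * (c + 2) * n - 1) := by
        rw [Real.sqrt_div' _ (by positivity), Real.sqrt_sq (by positivity), one_div_mul_eq_div]

/-- A unit lower triangular matrix `L` with subdiagonal entries bounded by `1` is invertible,
with `‖L⁻¹‖_F² ≤ (4^b + 6b − 1)/9` and hence `‖L⁻¹‖₂ ≤ (1/3)·(4^b + 6b − 1)^{1/2}`. -/
theorem unit_lower_triangular_inv_norm_bound (b : ℕ) (hb : 1 ≤ b)
    (L : Matrix (Fin b) (Fin b) ℝ)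
    (hdiag : ∀ i, L i i = 1)
    (hzero : ∀ i j : Fin b, (i : ℕ) < (j : ℕ) → L i j = 0)
    (hbdd : ∀ i j : Fin b, (j : ℕ) < (i : ℕ) → |L i j| ≤ 1) :
    IsUnit L.det ∧
    (∑ i, ∑ j, (L⁻¹ i j) ^ 2) ≤ ((4:ℝ) ^ b + 6 * b - 1) / 9 ∧
    specNorm L⁻¹ ≤ (1 / 3) * Real.sqrt ((4:ℝ) ^ b + 6 * b - 1) := by
  have h := unit_lower_triangular_inv_norm_bound_general zero_le_one hzero hdiag hbdd
  norm_num only [Real.norm_eq_abs, sq_abs] at h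
  exact h
end

section
/- Let A ∈ ℝ^{n×n} be symmetric, let i ≠ j be indices, and let Q ∈ ℝ^{n×n} be an orthogonal matrix that agrees with the identity matrix outside the 2×2 principal submatrix on rows and columns {i,j} (that is, Q(k,l) = δ_{kl} whenever k ∉ {i,j} or l ∉ {i,j}). Set B = Qᵀ A Q. If B(i,j) = 0, then the off-diagonal norm satisfies Ξ(B)² = Ξ(A)² − 2·A(i,j)². -/
open Matrix

/-- The squared off-diagonal norm `Ξ(A)² = Σ_{i≠j} A(i,j)²`. -/
noncomputable def offDiagSq {n : ℕ} (A : Matrix (Fin n) (Fin n) ℝ) : ℝ :=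
  ∑ i, ∑ j, if i ≠ j then (A i j) ^ 2 else 0

/-- The off-diagonal norm `Ξ(A)`. -/
noncomputable def offXi {n : ℕ} (A : Matrix (Fin n) (Fin n) ℝ) : ℝ :=
  Real.sqrt (offDiagSq A)

/-!
Write `B = Qᵀ * A * Q`, where `Q` is orthogonal and agrees with the identity in the columns
outside `s`. An orthogonal matrix preserves the sum of squares of a vector, and `Q` does not touch
the coordinates outside `s`, so it also preserves the sum of squares over `s`. Hence `A` and `B`
have the same Frobenius norm, both on the whole matrix and on the `s × s` block. Their diagonals
agree outside `s`, so whatever the block loses off the diagonal is lost by the whole matrix. For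
`s = {i, j}` the off-diagonal part of the block consists of the entries `(i, j)` and `(j, i)`.
-/

section OffDiagonal

variable {ι R : Type*} [CommRing R]

/-- The squared off-diagonal norm of the principal submatrix of `M` on `s`. The block is
selected by a finset of indices rather than a subtype, so that `s = Finset.univ` gives `Ξ(M)²`. -/
def offDiagSqOn (s : Finset ι) (M : Matrix ι ι R) : R :=
  ∑ p ∈ s.offDiag, M p.1 p.2 ^ 2

theorem offDiagSqOn_add_sum_diag (s : Finset ι) (M : Matrix ι ι R) :
    offDiagSqOn s M + ∑ k ∈ s, M k k ^ 2 = ∑ k ∈ s, ∑ l ∈ s, M k l ^ 2 := by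
  classical
  rw [← Finset.sum_product' (f := fun k l => M k l ^ 2), ← s.diag_union_offDiag,
    Finset.sum_union s.disjoint_diag_offDiag, Finset.sum_diag, add_comm, offDiagSqOn]

theorem offDiagSqOn_pair [DecidableEq ι] {i j : ι} (hij : i ≠ j) (M : Matrix ι ι R) :
    offDiagSqOn {i, j} M = M i j ^ 2 + M j i ^ 2 := by
  have block := offDiagSqOn_add_sum_diag {i, j} M
  simp only [Finset.sum_pair hij] at block
  linear_combination block

end OffDiagonal

theorem offXi_sq_eq_offDiagSqOn_univ {n : ℕ} (M : Matrix (Fin n) (Fin n) ℝ) :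
    offXi M ^ 2 = offDiagSqOn Finset.univ M := by
  have offDiag_univ : (Finset.univ : Finset (Fin n)).offDiag =
      Finset.univ.filter fun p => p.1 ≠ p.2 := by ext; simp
  have offDiagSq_eq : offDiagSq M = offDiagSqOn Finset.univ M := by
    rw [offDiagSqOn, offDiag_univ, Finset.sum_filter, Fintype.sum_prod_type, offDiagSq]
  have nonneg : 0 ≤ offDiagSqOn Finset.univ M := Finset.sum_nonneg fun _ _ => sq_nonneg _
  rw [offXi, offDiagSq_eq, Real.sq_sqrt nonneg]

section OrthogonalConjugation

variable {ι κ R : Type*} [Fintype ι] [DecidableEq ι] [CommRing R] {Q : Matrix ι ι R}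
  {s : Finset ι}

theorem mul_apply_of_col_eq_one {l : ι} (hQl : ∀ k, Q k l = (1 : Matrix ι ι R) k l)
    (M : Matrix κ ι R) (k : κ) : (M * Q) k l = M k l := by
  simp_rw [mul_apply, hQl, ← mul_apply, Matrix.mul_one]

theorem transpose_mul_apply_of_col_eq_one {k : ι} (hQk : ∀ l, Q l k = (1 : Matrix ι ι R) l k)
    (M : Matrix ι κ R) (l : κ) : (Qᵀ * M) k l = M k l := by
  rw [← transpose_apply (Qᵀ * M), transpose_mul, transpose_transpose,
    mul_apply_of_col_eq_one hQk, transpose_apply]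

theorem sum_sq_row_mul (hQ : Qᵀ * Q = 1) (M : Matrix κ ι R) (k : κ) :
    ∑ l, (M * Q) k l ^ 2 = ∑ l, M k l ^ 2 := by
  have gram : (M * Q) * (M * Q)ᵀ = M * Mᵀ := by
    rw [transpose_mul, Matrix.mul_assoc, ← Matrix.mul_assoc Q, mul_eq_one_comm.mp hQ,
      Matrix.one_mul]
  simpa only [mul_apply (M := M * Q), mul_apply (M := M) (N := Mᵀ), transpose_apply, ← sq]
    using congr_fun₂ gram k k

theorem sum_sq_row_mul_on (hQ : Qᵀ * Q = 1)
    (hQs : ∀ k, ∀ l ∉ s, Q k l = (1 : Matrix ι ι R) k l) (M : Matrix κ ι R) (k : κ) :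
    ∑ l ∈ s, (M * Q) k l ^ 2 = ∑ l ∈ s, M k l ^ 2 := by
  have outside : ∑ l ∈ sᶜ, (M * Q) k l ^ 2 = ∑ l ∈ sᶜ, M k l ^ 2 :=
    Finset.sum_congr rfl fun l hl => by
      rw [mul_apply_of_col_eq_one fun k => hQs k l (Finset.mem_compl.mp hl)]
  have total := sum_sq_row_mul hQ M k
  rw [← s.sum_add_sum_compl, ← s.sum_add_sum_compl (fun l => M k l ^ 2), outside] at total
  exact add_right_cancel total

theorem sum_sq_col_transpose_mul_on (hQ : Qᵀ * Q = 1)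
    (hQs : ∀ k, ∀ l ∉ s, Q k l = (1 : Matrix ι ι R) k l) (M : Matrix ι κ R) (l : κ) :
    ∑ k ∈ s, (Qᵀ * M) k l ^ 2 = ∑ k ∈ s, M k l ^ 2 := by
  simp_rw [← transpose_apply (Qᵀ * M), transpose_mul, transpose_transpose,
    sum_sq_row_mul_on hQ hQs, transpose_apply]

theorem sum_sq_transpose_mul_mul_on (hQ : Qᵀ * Q = 1)
    (hQs : ∀ k, ∀ l ∉ s, Q k l = (1 : Matrix ι ι R) k l) (A : Matrix ι ι R) :
    ∑ k ∈ s, ∑ l ∈ s, (Qᵀ * A * Q) k l ^ 2 = ∑ k ∈ s, ∑ l ∈ s, A k l ^ 2 := by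
  simp_rw [sum_sq_row_mul_on hQ hQs]
  rw [Finset.sum_comm]
  simp_rw [sum_sq_col_transpose_mul_on hQ hQs]
  exact Finset.sum_comm

theorem offDiagSqOn_univ_sub_offDiagSqOn_transpose_mul_mul (hQ : Qᵀ * Q = 1)
    (hQs : ∀ k, ∀ l ∉ s, Q k l = (1 : Matrix ι ι R) k l) (A : Matrix ι ι R) :
    offDiagSqOn Finset.univ (Qᵀ * A * Q) - offDiagSqOn s (Qᵀ * A * Q) =
      offDiagSqOn Finset.univ A - offDiagSqOn s A := by
  have diag_outside : ∑ k ∈ sᶜ, (Qᵀ * A * Q) k k ^ 2 = ∑ k ∈ sᶜ, A k k ^ 2 :=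
    Finset.sum_congr rfl fun k hk => by
      have hQk := fun l => hQs l k (Finset.mem_compl.mp hk)
      rw [mul_apply_of_col_eq_one hQk, transpose_mul_apply_of_col_eq_one hQk]
  have frobenius := sum_sq_transpose_mul_mul_on (s := Finset.univ) hQ (by simp) A
  have frobenius_block := sum_sq_transpose_mul_mul_on hQ hQs A
  simp only [← offDiagSqOn_add_sum_diag] at frobenius frobenius_block
  rw [← s.sum_add_sum_compl, ← s.sum_add_sum_compl (fun k => A k k ^ 2), diag_outside]
    at frobenius
  linear_combination frobenius - frobenius_block

theorem jacobi_rotation_offdiag_decrease_general {i j : ι} (hij : i ≠ j) (hQ : Qᵀ * Q = 1)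
    (hQij : ∀ k, ∀ l ∉ ({i, j} : Finset ι), Q k l = (1 : Matrix ι ι R) k l)
    {A B : Matrix ι ι R} (hB : B = Qᵀ * A * Q) :
    offDiagSqOn Finset.univ B =
      offDiagSqOn Finset.univ A - (A i j ^ 2 + A j i ^ 2) + (B i j ^ 2 + B j i ^ 2) := by
  rw [← offDiagSqOn_pair hij, ← offDiagSqOn_pair hij, hB, ← sub_eq_iff_eq_add]
  exact offDiagSqOn_univ_sub_offDiagSqOn_transpose_mul_mul hQ hQij A

end OrthogonalConjugation

/-- A Jacobi rotation supported on rows/columns `{i,j}` that annihilates the `(i,j)` entry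
reduces the squared off-diagonal norm by exactly `2·A(i,j)²`. -/
theorem jacobi_rotation_offdiag_decrease (n : ℕ)
    (A : Matrix (Fin n) (Fin n) ℝ) (hA : Aᵀ = A)
    (i j : Fin n) (hij : i ≠ j)
    (Q : Matrix (Fin n) (Fin n) ℝ) (hQ : Qᵀ * Q = 1)
    (hQsupp : ∀ k l : Fin n, (k ∉ ({i, j} : Set (Fin n)) ∨ l ∉ ({i, j} : Set (Fin n))) →
      Q k l = if k = l then 1 else 0)
    (B : Matrix (Fin n) (Fin n) ℝ) (hB : B = Qᵀ * A * Q)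
    (hzero : B i j = 0) :
    offXi B ^ 2 = offXi A ^ 2 - 2 * A i j ^ 2 := by
  have hBsymm : B.IsSymm := by
    rw [IsSymm, hB, transpose_mul, transpose_mul, transpose_transpose, hA, Matrix.mul_assoc]
  have hQij : ∀ k, ∀ l ∉ ({i, j} : Finset (Fin n)), Q k l = (1 : Matrix _ _ ℝ) k l :=
    fun k l hl => hQsupp k l (.inr (by simpa using hl))
  rw [offXi_sq_eq_offDiagSqOn_univ, offXi_sq_eq_offDiagSqOn_univ,
    jacobi_rotation_offdiag_decrease_general hij hQ hQij hB,
    hBsymm.apply i j, hzero, IsSymm.apply hA i j]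
  ring
end

section
/- Let A, B ∈ ℝ^{n×n}, let D₁, D₃ ∈ ℝ^{n×n} be diagonal matrices, and let M ∈ ℝ^{3n×3n} be the block matrix with block rows ( D₁ A 0 ), ( 0 I B ), ( 0 0 D₃ ). Fix an index i and set λ = D₃(i,i). Assume λ ≠ 1 and λ ≠ D₁(j,j) for every j (so that λI − D₁ is invertible). Then the vector v ∈ ℝ^{3n} with blocks v₁ = (λ−1)^{-1}(λI − D₁)^{-1} A B e_i, v₂ = (λ−1)^{-1} B e_i, v₃ = e_i satisfies M v = λ v, and v ≠ 0; in particular λ is an eigenvalue of M with eigenvector v. -/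
open Matrix

/-- The `3n × 3n` block matrix with block rows `(D₁ A 0)`, `(0 I B)`, `(0 0 D₃)`. -/
noncomputable def tripleBlock {n : ℕ} (D₁ A B D₃ : Matrix (Fin n) (Fin n) ℝ) :
    Matrix (Fin n ⊕ (Fin n ⊕ Fin n)) (Fin n ⊕ (Fin n ⊕ Fin n)) ℝ :=
  fun r c =>
    match r, c with
    | .inl j, .inl k => D₁ j k
    | .inl j, .inr (.inl k) => A j k
    | .inl _, .inr (.inr _) => 0
    | .inr (.inl _), .inl _ => 0
    | .inr (.inl j), .inr (.inl k) => (1 : Matrix (Fin n) (Fin n) ℝ) j k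
    | .inr (.inl j), .inr (.inr k) => B j k
    | .inr (.inr _), .inl _ => 0
    | .inr (.inr _), .inr (.inl _) => 0
    | .inr (.inr j), .inr (.inr k) => D₃ j k

section BlockTriangular

variable {R m n : Type*} [CommRing R] [Fintype m] [DecidableEq m] [Fintype n]

-- One step of back substitution; two of these steps produce the blocks of `v` from the last one.
theorem fromBlocks_zero_mulVec_sumElim_eq_smul {P : Matrix m m R} {Q : Matrix m n R}
    {S : Matrix n n R} {c : R} {x : m → R} {y : n → R}
    (hx : (c • (1 : Matrix m m R) - P) *ᵥ x = Q *ᵥ y) (hy : S *ᵥ y = c • y) :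
    fromBlocks P Q 0 S *ᵥ Sum.elim x y = c • Sum.elim x y := by
  have hPQ : P *ᵥ x + Q *ᵥ y = c • x := by
    rw [← hx, sub_mulVec, smul_mulVec, one_mulVec, add_sub_cancel]
  rw [fromBlocks_mulVec, Sum.elim_comp_inl, Sum.elim_comp_inr, hPQ, zero_mulVec, zero_add, hy]
  exact (Sum.comp_elim (c • ·) x y).symm

end BlockTriangular

section Diagonal

variable {R n : Type*} [Fintype n] [DecidableEq n]

theorem isUnit_smul_one_sub_iff_of_isDiag [CommRing R] {D : Matrix n n R} (hD : D.IsDiag) {c : R} :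
    IsUnit (c • (1 : Matrix n n R) - D) ↔ ∀ j, IsUnit (c - D j j) := by
  have hdiag : c • (1 : Matrix n n R) - D = diagonal fun j => c - D j j := by
    conv_lhs => rw [← hD.diagonal_diag, smul_one_eq_diagonal, diagonal_sub]
    rfl
  rw [hdiag, isUnit_diagonal, Pi.isUnit_iff]

theorem mulVec_single_one_of_isDiag [Semiring R] {D : Matrix n n R} (hD : D.IsDiag)
    (i : n) : D *ᵥ Pi.single i 1 = D i i • Pi.single i (1 : R) := by
  rw [← Pi.single_smul', smul_eq_mul, ← diag_apply D, ← diagonal_mulVec_single, hD.diagonal_diag]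

end Diagonal

theorem tripleBlock_eq_fromBlocks {n : ℕ} (D₁ A B D₃ : Matrix (Fin n) (Fin n) ℝ) :
    tripleBlock D₁ A B D₃ = fromBlocks D₁ (fromCols A 0) 0 (fromBlocks 1 B 0 D₃) := by
  ext (j | j | j) (k | k | k) <;> rfl

theorem tripleBlock_eigenpair_general {K l m n : Type*} [Field K]
    [Fintype l] [DecidableEq l] [Fintype m] [DecidableEq m] [Fintype n]
    (A : Matrix l m K) (B : Matrix m n K) (D₁ : Matrix l l K) (D₃ : Matrix n n K) {lam : K}
    (hne1 : lam ≠ 1) (hD₁ : IsUnit (lam • (1 : Matrix l l K) - D₁))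
    {w : n → K} (hw : D₃ *ᵥ w = lam • w) (hw0 : w ≠ 0) (v : l ⊕ (m ⊕ n) → K)
    (hv : v = Sum.elim ((lam - 1)⁻¹ • ((lam • (1 : Matrix l l K) - D₁)⁻¹ * A * B) *ᵥ w)
      (Sum.elim ((lam - 1)⁻¹ • B *ᵥ w) w)) :
    fromBlocks D₁ (fromCols A 0) 0 (fromBlocks 1 B 0 D₃) *ᵥ v = lam • v ∧ v ≠ 0 := by
  subst hv
  have hmiddle : (lam • (1 : Matrix m m K) - 1) *ᵥ ((lam - 1)⁻¹ • B *ᵥ w) = B *ᵥ w := by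
    have hscalar : lam • (1 : Matrix m m K) - 1 = (lam - 1) • 1 := by rw [sub_smul, one_smul]
    rw [hscalar, smul_mulVec, one_mulVec, smul_inv_smul₀ (sub_ne_zero.2 hne1)]
  have htop : (lam • (1 : Matrix l l K) - D₁) *ᵥ
      ((lam - 1)⁻¹ • ((lam • (1 : Matrix l l K) - D₁)⁻¹ * A * B) *ᵥ w) =
        fromCols A 0 *ᵥ Sum.elim ((lam - 1)⁻¹ • B *ᵥ w) w := by
    rw [fromCols_mulVec_sumElim, zero_mulVec, add_zero, mulVec_smul, mulVec_smul, mulVec_mulVec,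
      mulVec_mulVec, Matrix.mul_assoc _ A B,
      mul_nonsing_inv_cancel_left _ _ ((isUnit_iff_isUnit_det _).1 hD₁)]
  refine ⟨fromBlocks_zero_mulVec_sumElim_eq_smul htop
    (fromBlocks_zero_mulVec_sumElim_eq_smul hmiddle hw), fun hzero => hw0 ?_⟩
  exact funext fun j => congrFun hzero (.inr (.inr j))

/-- The reduction of matrix multiplication to the nonsymmetric eigenvalue problem:
for `λ = D₃(i,i)` distinct from `1` and from all diagonal entries of `D₁`, the vector with
blocks `(λ−1)⁻¹(λI − D₁)⁻¹ A B e_i`, `(λ−1)⁻¹ B e_i`, `e_i` is an eigenvector of the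
block matrix `M` for the eigenvalue `λ`. -/
theorem tripleBlock_eigenpair (n : ℕ)
    (A B D₁ D₃ : Matrix (Fin n) (Fin n) ℝ)
    (hD₁ : ∀ j k : Fin n, j ≠ k → D₁ j k = 0)
    (hD₃ : ∀ j k : Fin n, j ≠ k → D₃ j k = 0)
    (i : Fin n) (lam : ℝ) (hlam : lam = D₃ i i)
    (hne1 : lam ≠ 1) (hneD₁ : ∀ j : Fin n, lam ≠ D₁ j j)
    (v : Fin n ⊕ (Fin n ⊕ Fin n) → ℝ)
    (hv : v = Sum.elim
      ((lam - 1)⁻¹ • ((lam • (1 : Matrix (Fin n) (Fin n) ℝ) - D₁)⁻¹ * A * B).mulVec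
        (Pi.single i 1))
      (Sum.elim ((lam - 1)⁻¹ • B.mulVec (Pi.single i 1)) (Pi.single i 1))) :
    (tripleBlock D₁ A B D₃).mulVec v = lam • v ∧ v ≠ 0 := by
  rw [tripleBlock_eq_fromBlocks]
  exact tripleBlock_eigenpair_general A B D₁ D₃ hne1
    ((isUnit_smul_one_sub_iff_of_isDiag hD₁).2 fun j => (sub_ne_zero.2 (hneD₁ j)).isUnit)
    (hlam ▸ mulVec_single_one_of_isDiag hD₃ i) (Pi.single_ne_zero_iff.2 one_ne_zero) v hv
end

section
/- Let 0 < f < 1, let n ≥ 1 and t ≥ 1 be real numbers, let k be a natural number, and set S = Σ_{i=1}^{k+1} f^i. Then 2^{1+S} · n^{f^{k+2}} ≤ t if and only if f^{k+2} · ((1−f)·log₂(n) − 1) ≤ (1−f)·log₂(t) − 1. -/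
theorem one_sub_mul_one_add_sum_Icc_pow {R : Type*} [Ring R] (x : R) (m : ℕ) :
    (1 - x) * (1 + ∑ i ∈ Finset.Icc 1 m, x ^ i) = 1 - x ^ (m + 1) := by
  have sum_eq : 1 + ∑ i ∈ Finset.Icc 1 m, x ^ i = ∑ i ∈ Finset.range (m + 1), x ^ i := by
    rw [Finset.range_eq_Ico, Finset.sum_eq_sum_Ico_succ_bot m.add_one_pos, pow_zero, zero_add,
      Finset.Ico_add_one_right_eq_Icc]
  rw [sum_eq, mul_neg_geom_sum]

theorem logb_rpow_mul_rpow {b n : ℝ} (hb0 : 0 < b) (hb1 : b ≠ 1) (hn : 0 < n) (x y : ℝ) :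
    Real.logb b (b ^ x * n ^ y) = x + y * Real.logb b n := by
  rw [Real.logb_mul (Real.rpow_pos_of_pos hb0 x).ne' (Real.rpow_pos_of_pos hn y).ne',
    Real.logb_rpow hb0 hb1, Real.logb_rpow_eq_mul_logb_of_pos hn]

theorem rpow_mul_rpow_le_iff_add_mul_logb_le {b n t : ℝ} (hb : 1 < b) (hn : 0 < n) (ht : 0 < t)
    (x y : ℝ) : b ^ x * n ^ y ≤ t ↔ x + y * Real.logb b n ≤ Real.logb b t := by
  have hb0 : 0 < b := one_pos.trans hb
  rw [← logb_rpow_mul_rpow hb0 hb.ne' hn x y, Real.logb_le_logb hb (by positivity) ht]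

theorem recursion_threshold_iff_general {b f n t : ℝ} (hb : 1 < b) (hf : f < 1) (hn : 0 < n)
    (ht : 0 < t) (m : ℕ) :
    b ^ (1 + ∑ i ∈ Finset.Icc 1 m, f ^ i) * n ^ (f ^ (m + 1)) ≤ t ↔
      f ^ (m + 1) * ((1 - f) * Real.logb b n - 1) ≤ (1 - f) * Real.logb b t - 1 := by
  have scaled_exponent :
      (1 - f) * (1 + ∑ i ∈ Finset.Icc 1 m, f ^ i + f ^ (m + 1) * Real.logb b n) =
        f ^ (m + 1) * ((1 - f) * Real.logb b n - 1) + 1 := by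
    rw [mul_add, one_sub_mul_one_add_sum_Icc_pow]
    ring
  rw [rpow_mul_rpow_le_iff_add_mul_logb_le hb hn ht, ← mul_le_mul_iff_right₀ (sub_pos.2 hf),
    scaled_exponent, le_sub_iff_add_le]

/-- The recursion-depth equivalence (equations (4.12)–(4.13)): with
`S = Σ_{i=1}^{k+1} f^i`, one has `2^{1+S}·n^{f^{k+2}} ≤ t` iff
`f^{k+2}·((1−f)·log₂ n − 1) ≤ (1−f)·log₂ t − 1`. -/
theorem recursion_threshold_iff (f : ℝ) (hf0 : 0 < f) (hf1 : f < 1)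
    (n t : ℝ) (hn : 1 ≤ n) (ht : 1 ≤ t) (k : ℕ) (S : ℝ)
    (hS : S = ∑ i ∈ Finset.Icc 1 (k + 1), f ^ i) :
    (2 : ℝ) ^ (1 + S) * n ^ (f ^ (k + 2)) ≤ t ↔
      f ^ (k + 2) * ((1 - f) * Real.logb 2 n - 1) ≤ (1 - f) * Real.logb 2 t - 1 := by
  subst hS
  exact recursion_threshold_iff_general one_lt_two hf1 (by linarith) (by linarith) (k + 1)
end

section
/- Let 2 < ω₀ < 3 and let (f_i)_{i≥1} be a sequence of real numbers with 0 < f_i < 1 for all i, satisfying f_{i+1} > 1 − (1−f_i)/((3−ω₀)·f_i) for every i. Define P_j = Π_{i=1}^{j} f_i. Then the sequence j ↦ 2 + P_{j+1} − (3−ω₀)·P_{j+2} is strictly decreasing in j. -/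
/-!
Write `P_j = ∏_{i ≤ j} f_i`, `c = 3 - ω₀`, `a = f_{j+2}` and `b = f_{j+3}`. The exponent drops
from index `j` to `j + 1` by `P_{j+1} * (1 - a - c * a * (1 - b))`, and `P_{j+1}` is positive, so
the drop is positive exactly when `c * a * (1 - b) < 1 - a`.
-/

section OrderedRing

variable {R : Type*} [CommRing R] [LinearOrder R] [IsStrictOrderedRing R]

theorem add_mul_sub_mul_lt_add_sub_mul_iff {p : R} (hp : 0 < p) (d c a b : R) :
    d + p * a - c * (p * a * b) < d + p - c * (p * a) ↔ c * a * (1 - b) < 1 - a := by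
  have drop_eq : d + p - c * (p * a) - (d + p * a - c * (p * a * b)) =
      p * (1 - a - c * a * (1 - b)) := by ring
  rw [← sub_pos, drop_eq, mul_pos_iff_of_pos_left hp, sub_pos]

theorem exponent_succ_lt_iff {f : ℕ → R} (hf : ∀ i, 1 ≤ i → 0 < f i) (d c : R) (j : ℕ) :
    d + (∏ i ∈ Finset.Icc 1 (j + 2), f i) - c * ∏ i ∈ Finset.Icc 1 (j + 3), f i <
        d + (∏ i ∈ Finset.Icc 1 (j + 1), f i) - c * ∏ i ∈ Finset.Icc 1 (j + 2), f i ↔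
      c * f (j + 2) * (1 - f (j + 3)) < 1 - f (j + 2) := by
  have prod_pos : 0 < ∏ i ∈ Finset.Icc 1 (j + 1), f i :=
    Finset.prod_pos fun i hi => hf i (Finset.mem_Icc.mp hi).1
  rw [Finset.prod_Icc_succ_top (b := j + 2) (by lia),
    Finset.prod_Icc_succ_top (b := j + 1) (by lia)]
  exact add_mul_sub_mul_lt_add_sub_mul_iff prod_pos d c _ _

end OrderedRing

section OrderedField

variable {K : Type*} [Field K] [LinearOrder K] [IsStrictOrderedRing K]

theorem one_sub_div_mul_lt_iff {c a : K} (hc : 0 < c) (ha : 0 < a) (b : K) :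
    1 - (1 - a) / (c * a) < b ↔ c * a * (1 - b) < 1 - a := by
  rw [sub_lt_comm, lt_div_iff₀' (mul_pos hc ha)]

theorem varying_log_block_exponents_decrease_general {ω₀ : K} (hω3 : ω₀ < 3) {f : ℕ → K}
    (hf : ∀ i, 1 ≤ i → 0 < f i) :
    StrictAnti (fun j : ℕ =>
        2 + (∏ i ∈ Finset.Icc 1 (j + 1), f i) - (3 - ω₀) * ∏ i ∈ Finset.Icc 1 (j + 2), f i) ↔
      ∀ i, 2 ≤ i → f (i + 1) > 1 - (1 - f i) / ((3 - ω₀) * f i) := by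
  have step_iff (j : ℕ) := (exponent_succ_lt_iff hf 2 (3 - ω₀) j).trans
    (one_sub_div_mul_lt_iff (sub_pos.mpr hω3) (hf (j + 2) (by lia)) (f (j + 3))).symm
  constructor
  · intro hanti i hi
    obtain ⟨j, rfl⟩ := Nat.exists_eq_add_of_le' hi
    exact (step_iff j).mp (hanti j.lt_succ_self)
  · intro hcond
    exact strictAnti_nat_of_succ_lt fun j => (step_iff j).mpr (hcond (j + 2) (by lia))

end OrderedField

/-- Variable-log-block-size recursive Jacobi: if the log block sizes `f_i ∈ (0,1)` satisfy
`f_{i+1} > 1 − (1−f_i)/((3−ω₀)f_i)`, then the exponents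
`2 + Π_{i=1}^{j+1} f_i − (3−ω₀)·Π_{i=1}^{j+2} f_i` are strictly decreasing in `j`. -/
theorem varying_log_block_exponents_decrease (ω₀ : ℝ) (hω2 : 2 < ω₀) (hω3 : ω₀ < 3)
    (f : ℕ → ℝ) (hf : ∀ i, 1 ≤ i → 0 < f i ∧ f i < 1)
    (hcond : ∀ i, 1 ≤ i → f (i + 1) > 1 - (1 - f i) / ((3 - ω₀) * f i)) :
    StrictAnti (fun j : ℕ =>
      2 + (∏ i ∈ Finset.Icc 1 (j + 1), f i) -
        (3 - ω₀) * ∏ i ∈ Finset.Icc 1 (j + 2), f i) :=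
  (varying_log_block_exponents_decrease_general hω3 fun i hi => (hf i hi).1).mpr
    fun i hi => hcond i (by lia)
end
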